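/- Let A be a deterministic complete automaton, and let T, S be sets of states of A such that T is a minimal trap set, S ∩ T ≠ ∅, and T \ S is nonempty and not a transient of A. Then for every run ρ of A and every index i with ρ_i ∈ T, the finite word read along ρ up to position i is an ugly prefix for the acceptance condition Inf(S). -/

import Mathlib

/-- One-step transition relation: `q → q'` iff `(q, a, q') ∈ δ` for some letter `a`. -/
def Step {Q A : Type*} (δ : Set (Q × A × Q)) (q q' : Q) : Prop :=
  ∃ a, (q, a, q') ∈ δ

/-- A run of the automaton: an infinite sequence of states starting in an initial
state and following the transition relation. -/
def IsRun {Q A : Type*} (δ : Set (Q × A × Q)) (Q₀ : Set Q) (ρ : ℕ → Q) : Prop :=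
  ρ 0 ∈ Q₀ ∧ ∀ i, Step δ (ρ i) (ρ (i + 1))

/-- A trap set: a nonempty set of states closed under the transition relation. -/
def IsTrap {Q A : Type*} (δ : Set (Q × A × Q)) (T : Set Q) : Prop :=
  T.Nonempty ∧ ∀ q ∈ T, ∀ q', Step δ q q' → q' ∈ T

/-- Reachability: reflexive-transitive closure of the transition relation. -/
def Reach {Q A : Type*} (δ : Set (Q × A × Q)) : Q → Q → Prop :=
  Relation.ReflTransGen (Step δ)

/-- A strongly connected component: a maximal set of pairwise-reachable states. -/
def IsSCC {Q A : Type*} (δ : Set (Q × A × Q)) (K : Set Q) : Prop :=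
  (∀ p ∈ K, ∀ q ∈ K, Reach δ p q) ∧
  ∀ K', K ⊆ K' → (∀ p ∈ K', ∀ q ∈ K', Reach δ p q) → K' = K

/-- A bottom SCC: an SCC closed under the transition relation. -/
def IsBSCC {Q A : Type*} (δ : Set (Q × A × Q)) (K : Set Q) : Prop :=
  IsSCC δ K ∧ ∀ q ∈ K, ∀ q', Step δ q q' → q' ∈ K

/-- A minimal trap set: a trap set with no proper subset that is a trap set. -/
def IsMinTrap {Q A : Type*} (δ : Set (Q × A × Q)) (T : Set Q) : Prop :=
  IsTrap δ T ∧ ∀ T', T' ⊂ T → ¬ IsTrap δ T'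

/-- A transient: a set of states that every run of the automaton leaves
infinitely often (i.e., every run visits its complement infinitely often). -/
def IsTransient {Q A : Type*} (δ : Set (Q × A × Q)) (Q₀ : Set Q) (C : Set Q) : Prop :=
  ∀ ρ, IsRun δ Q₀ ρ → {i | ρ i ∉ C}.Infinite

/-- A run of the automaton on the infinite word `w`. -/
def IsRunOn {Q A : Type*} (δ : Set (Q × A × Q)) (Q₀ : Set Q)
    (w : ℕ → A) (ρ : ℕ → Q) : Prop :=
  ρ 0 ∈ Q₀ ∧ ∀ i, (ρ i, w i, ρ (i + 1)) ∈ δ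

/-- Concatenation of a finite word `u` with an infinite word `w`. -/
def wcat {A : Type*} (u : List A) (w : ℕ → A) : ℕ → A :=
  fun n => if h : n < u.length then u.get ⟨n, h⟩ else w (n - u.length)

/-- `u` is a good prefix for the acceptance condition `φ` (w.r.t. the function
`run` assigning to each infinite word its unique run): every infinite
continuation of `u` yields a word whose run models `φ`. -/
def GoodPrefix {Q A : Type*} (run : (ℕ → A) → ℕ → Q)
    (φ : (ℕ → Q) → Prop) (u : List A) : Prop :=
  ∀ w : ℕ → A, φ (run (wcat u w))

/-- `u` is a bad prefix for `φ`: no infinite continuation of `u` yields a word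
whose run models `φ`. -/
def BadPrefix {Q A : Type*} (run : (ℕ → A) → ℕ → Q)
    (φ : (ℕ → Q) → Prop) (u : List A) : Prop :=
  ∀ w : ℕ → A, ¬ φ (run (wcat u w))

/-- `u` is an ugly prefix for `φ`: no finite extension of `u` is good or bad. -/
def UglyPrefix {Q A : Type*} (run : (ℕ → A) → ℕ → Q)
    (φ : (ℕ → Q) → Prop) (u : List A) : Prop :=
  ∀ v : List A, ¬ GoodPrefix run φ (u ++ v) ∧ ¬ BadPrefix run φ (u ++ v)

/-!
Any two states of a minimal trap set `T` reach each other, so each state of `T` starts a run that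
visits a given state of `S ∩ T` infinitely often. A run witnessing that `T \ S` is not a transient
eventually stays in `T \ S`, so each state of `T` also starts a run that visits `S` only finitely
often. As `Inf(S)` does not depend on finite prefixes and `T` cannot be left, either run can be
appended to whatever was read before.
-/

/-- Determinism of the transition relation. Uniqueness of the initial state, the other half of
determinism of an automaton, is kept separate since runs are started in various states. -/
def IsDeterministic {Q A : Type*} (δ : Set (Q × A × Q)) : Prop :=
  ∀ q a q₁ q₂, (q, a, q₁) ∈ δ → (q, a, q₂) ∈ δ → q₁ = q₂

/-- A prefix-independent acceptance condition: dropping finitely many initial states of a sequence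
does not change whether it is satisfied. -/
def IsPrefixIndependent {Q : Type*} (φ : (ℕ → Q) → Prop) : Prop :=
  ∀ r m, φ (fun n => r (n + m)) ↔ φ r

section PrefixIndependent

variable {Q : Type*}

theorem IsPrefixIndependent.not {φ : (ℕ → Q) → Prop} (hφ : IsPrefixIndependent φ) :
    IsPrefixIndependent fun r => ¬ φ r :=
  fun r m => not_congr (hφ r m)

theorem isPrefixIndependent_infinite_mem (S : Set Q) :
    IsPrefixIndependent fun r => {n | r n ∈ S}.Infinite := by
  intro r m
  simp only [← Nat.frequently_atTop_iff_infinite]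
  rw [← Filter.frequently_map (m := (· + m)) (P := fun n => r n ∈ S), Filter.map_add_atTop_eq_nat]

end PrefixIndependent

theorem exists_path_of_transGen {α : Type*} {R : α → α → Prop} {a b : α}
    (h : Relation.TransGen R a b) :
    ∃ (n : ℕ) (f : ℕ → α), f 0 = a ∧ f (n + 1) = b ∧ ∀ k ≤ n, R (f k) (f (k + 1)) := by
  induction h using Relation.TransGen.head_induction_on with
  | @single a hab =>
    refine ⟨0, fun | 0 => a | _ + 1 => b, rfl, rfl, fun k hk => ?_⟩
    obtain rfl : k = 0 := by omega
    exact hab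
  | @head a c hac _ ih =>
    obtain ⟨n, f, rfl, hfb, hf⟩ := ih
    refine ⟨n + 1, fun | 0 => a | k + 1 => f k, rfl, hfb, fun k hk => ?_⟩
    cases k with
    | zero => exact hac
    | succ k => exact hf k (by omega)

section Runs

variable {Q A : Type*} {δ : Set (Q × A × Q)} {Q₀ T C : Set Q}

theorem IsRun.drop {ρ : ℕ → Q} (hρ : IsRun δ Q₀ ρ) (m : ℕ) :
    IsRun δ {ρ m} fun n => ρ (n + m) :=
  ⟨by simp, fun n => by simpa only [Nat.add_right_comm] using hρ.2 (n + m)⟩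

theorem IsRun.cons {p q : Q} {σ : ℕ → Q} (hpq : Step δ p q) (hσ : IsRun δ {q} σ) :
    IsRun δ {p} fun | 0 => p | n + 1 => σ n := by
  obtain ⟨rfl, hstep⟩ := hσ
  refine ⟨rfl, fun n => ?_⟩
  cases n with
  | zero => exact hpq
  | succ n => exact hstep n

theorem IsPrefixIndependent.exists_isRun_of_reach {φ : (ℕ → Q) → Prop}
    (hφ : IsPrefixIndependent φ) {p q : Q} (hpq : Reach δ p q)
    (hq : ∃ σ, IsRun δ {q} σ ∧ φ σ) : ∃ σ, IsRun δ {p} σ ∧ φ σ := by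
  induction hpq using Relation.ReflTransGen.head_induction_on with
  | refl => exact hq
  | head hstep _ ih =>
    obtain ⟨σ, hσ, hφσ⟩ := ih
    exact ⟨_, hσ.cons hstep, (hφ _ 1).1 hφσ⟩

theorem exists_isRun_infinite_eq_of_transGen_self {s : Q}
    (hs : Relation.TransGen (Step δ) s s) :
    ∃ σ, IsRun δ {s} σ ∧ {n | σ n = s}.Infinite := by
  obtain ⟨n, f, hf₀, hf_last, hf⟩ := exists_path_of_transGen hs
  refine ⟨fun k => f (k % (n + 1)), ⟨by simpa using hf₀, fun k => ?_⟩, ?_⟩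
  · have hle : k % (n + 1) ≤ n := Nat.le_of_lt_succ (Nat.mod_lt k n.succ_pos)
    have hwrap : f (k % (n + 1) + 1) = f ((k + 1) % (n + 1)) := by
      rw [← Nat.mod_add_mod k]
      rcases hle.eq_or_lt with hk | hk
      · rw [hk, Nat.mod_self, hf_last, hf₀]
      · rw [Nat.mod_eq_of_lt (Nat.succ_lt_succ hk)]
    have hstep := hf _ hle
    rwa [hwrap] at hstep
  · refine Nat.frequently_atTop_iff_infinite.1 ?_
    exact (Nat.frequently_mod_eq n.succ_pos).mono fun k hk => (congrArg f hk).trans hf₀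

theorem exists_isRun_forall_mem_of_not_isTransient (hC : ¬ IsTransient δ Q₀ C) :
    ∃ σ, IsRun δ {σ 0} σ ∧ ∀ n, σ n ∈ C := by
  simp only [IsTransient, not_forall, Set.not_infinite] at hC
  obtain ⟨ρ, hρ, hfin⟩ := hC
  obtain ⟨m, hm⟩ := hfin.bddAbove
  refine ⟨fun n => ρ (n + (m + 1)), by simpa only [zero_add] using hρ.drop (m + 1), fun n => ?_⟩
  by_contra hn
  have : n + (m + 1) ≤ m := hm hn
  omega

theorem IsTrap.mem_of_reach (hT : IsTrap δ T) {p q : Q} (hp : p ∈ T) (hpq : Reach δ p q) :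
    q ∈ T := by
  induction hpq with
  | refl => exact hp
  | tail _ hstep ih => exact hT.2 _ ih _ hstep

theorem IsTrap.mem_of_isRun (hT : IsTrap δ T) {ρ : ℕ → Q} (hρ : IsRun δ Q₀ ρ) {i j : ℕ}
    (hij : i ≤ j) (hi : ρ i ∈ T) : ρ j ∈ T := by
  induction j, hij using Nat.le_induction with
  | base => exact hi
  | succ j _ ih => exact hT.2 _ ih _ (hρ.2 j)

theorem IsMinTrap.reach (hT : IsMinTrap δ T) {p q : Q} (hp : p ∈ T) (hq : q ∈ T) :
    Reach δ p q := by
  by_contra hpq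
  have hsub : {r | Reach δ p r} ⊆ T := fun _ => hT.1.mem_of_reach hp
  refine hT.2 {r | Reach δ p r} ⟨hsub, fun h => hpq (h hq)⟩ ⟨⟨p, .refl⟩, ?_⟩
  exact fun _ hr _ hstep => hr.tail hstep

theorem IsMinTrap.transGen_self (hT : IsMinTrap δ T) {p p' s : Q} (hp : p ∈ T)
    (hstep : Step δ p p') (hs : s ∈ T) : Relation.TransGen (Step δ) s s :=
  (Relation.TransGen.head' hstep (hT.reach (hT.1.2 p hp p' hstep) hs)).trans_right (hT.reach hs hp)

end Runs

section Words

variable {Q A : Type*} {δ : Set (Q × A × Q)} {Q₀ : Set Q} {w w' : ℕ → A} {ρ ρ' : ℕ → Q}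

theorem wcat_add_length (u : List A) (x : ℕ → A) (n : ℕ) : wcat u x (n + u.length) = x n := by
  simp [wcat]

theorem wcat_eq_getElem {u : List A} {n : ℕ} (hn : n < u.length) (x : ℕ → A) :
    wcat u x n = u[n] := by
  simp [wcat, hn]

theorem IsRunOn.isRun (hρ : IsRunOn δ Q₀ w ρ) : IsRun δ Q₀ ρ :=
  ⟨hρ.1, fun n => ⟨w n, hρ.2 n⟩⟩

theorem IsRun.exists_isRunOn (hρ : IsRun δ Q₀ ρ) : ∃ w, IsRunOn δ Q₀ w ρ := by
  choose w hw using hρ.2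
  exact ⟨w, hρ.1, hw⟩

theorem IsRunOn.drop (hρ : IsRunOn δ Q₀ w ρ) (m : ℕ) :
    IsRunOn δ {ρ m} (fun n => w (n + m)) fun n => ρ (n + m) :=
  ⟨by simp, fun n => by simpa only [Nat.add_right_comm] using hρ.2 (n + m)⟩

theorem IsRunOn.eq_of_agree (hdet : IsDeterministic δ) (hQ₀ : Q₀.Subsingleton)
    (hρ : IsRunOn δ Q₀ w ρ) (hρ' : IsRunOn δ Q₀ w' ρ') {n : ℕ} (hw : ∀ k < n, w k = w' k) :
    ρ n = ρ' n := by
  induction n with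
  | zero => exact hQ₀ hρ.1 hρ'.1
  | succ n ih =>
    have hn : ρ n = ρ' n := ih fun k hk => hw k (by omega)
    refine hdet _ _ _ _ (hρ.2 n) ?_
    rw [hn, hw n n.lt_succ_self]
    exact hρ'.2 n

theorem IsRun.exists_wcat_forall_isRunOn_eq (hdet : IsDeterministic δ) (hQ₀ : Q₀.Subsingleton)
    {u : List A} (hρ : IsRunOn δ Q₀ (wcat u w) ρ) {σ : ℕ → Q} (hσ : IsRun δ {ρ u.length} σ) :
    ∃ x, ∀ ρ', IsRunOn δ Q₀ (wcat u x) ρ' → ∀ n, ρ' (n + u.length) = σ n := by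
  obtain ⟨x, hx⟩ := hσ.exists_isRunOn
  refine ⟨x, fun ρ' hρ' n => ?_⟩
  have hlen : ρ' u.length = ρ u.length :=
    hρ'.eq_of_agree hdet hQ₀ hρ fun k hk => by rw [wcat_eq_getElem hk, wcat_eq_getElem hk]
  have htail := hρ'.drop u.length
  simp only [hlen, wcat_add_length] at htail
  exact htail.eq_of_agree hdet Set.subsingleton_singleton hx fun _ _ => rfl

theorem IsTrap.uglyPrefix (hdet : IsDeterministic δ) (hQ₀ : Q₀.Subsingleton)
    {run : (ℕ → A) → ℕ → Q} (hrun : ∀ w, IsRunOn δ Q₀ w (run w)) {T : Set Q} (hT : IsTrap δ T)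
    {φ : (ℕ → Q) → Prop} (hφ : IsPrefixIndependent φ)
    (hsat : ∀ p ∈ T, ∃ σ, IsRun δ {p} σ ∧ φ σ) (hviol : ∀ p ∈ T, ∃ σ, IsRun δ {p} σ ∧ ¬ φ σ)
    (hρ : IsRunOn δ Q₀ w ρ) {i : ℕ} (hi : ρ i ∈ T) :
    UglyPrefix run φ (List.ofFn fun k : Fin i => w k) := by
  intro v
  set u := (List.ofFn fun k : Fin i => w k) ++ v with hu
  have hrun_i : run (wcat u w) i = ρ i :=
    (hrun _).eq_of_agree hdet hQ₀ hρ fun k hk => by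
      simp [hu, wcat_eq_getElem, hk, Nat.lt_add_right]
  have hmem : run (wcat u w) u.length ∈ T :=
    hT.mem_of_isRun (hrun _).isRun (by simp [hu]) (hrun_i ▸ hi)
  have hcontinue {ψ : (ℕ → Q) → Prop} (hψ : IsPrefixIndependent ψ)
      (h : ∃ σ, IsRun δ {run (wcat u w) u.length} σ ∧ ψ σ) : ∃ x, ψ (run (wcat u x)) := by
    obtain ⟨σ, hσ, hψσ⟩ := h
    obtain ⟨x, hx⟩ := hσ.exists_wcat_forall_isRunOn_eq hdet hQ₀ (hrun _)
    exact ⟨x, (hψ _ u.length).1 (by simpa only [hx _ (hrun _)] using hψσ)⟩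
  obtain ⟨x, hx⟩ := hcontinue hφ (hsat _ hmem)
  obtain ⟨y, hy⟩ := hcontinue hφ.not (hviol _ hmem)
  exact ⟨fun hgood => hy (hgood y), fun hbad => hbad x hx⟩

end Words

theorem ugly_prefix_for_inf_general {Q A : Type*}
    {δ : Set (Q × A × Q)} {Q₀ : Set Q} (hQ₀ : Q₀.Subsingleton) (hdet : IsDeterministic δ)
    {run : (ℕ → A) → ℕ → Q} (hrun : ∀ w, IsRunOn δ Q₀ w (run w))
    {T S : Set Q} (hT : IsMinTrap δ T) (hST : (S ∩ T).Nonempty)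
    (hTStr : ¬ IsTransient δ Q₀ (T \ S))
    {ρ : ℕ → Q} {w : ℕ → A} (hρ : IsRunOn δ Q₀ w ρ) {i : ℕ} (hi : ρ i ∈ T) :
    UglyPrefix run (fun r => {n | r n ∈ S}.Infinite) (List.ofFn fun k : Fin i => w k) := by
  have hInf := isPrefixIndependent_infinite_mem S
  refine hT.1.uglyPrefix hdet hQ₀ hrun hInf (fun p hp => ?_) (fun p hp => ?_) hρ hi
  · obtain ⟨s, hsS, hsT⟩ := hST
    obtain ⟨σ, hσ, hσs⟩ :=
      exists_isRun_infinite_eq_of_transGen_self (hT.transGen_self hi (hρ.isRun.2 i) hsT)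
    have hσS : {n | σ n = s} ⊆ {n | σ n ∈ S} := by
      rintro n rfl
      exact hsS
    exact hInf.exists_isRun_of_reach (hT.reach hp hsT) ⟨σ, hσ, hσs.mono hσS⟩
  · obtain ⟨σ, hσ, hσTS⟩ := exists_isRun_forall_mem_of_not_isTransient hTStr
    have hσS : {n | σ n ∈ S} = ∅ := Set.eq_empty_of_forall_notMem fun n => (hσTS n).2
    exact hInf.not.exists_isRun_of_reach (hT.reach hp (hσTS 0).1) ⟨σ, hσ, by simp [hσS]⟩

/-- In a deterministic complete automaton, if `T` is a minimal
trap set, `S ∩ T ≠ ∅`, and `T \ S` is nonempty and not a transient, then for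
every run `ρ` (on word `w`) and index `i` with `ρ i ∈ T`, the finite word
`w₀ ⋯ w_{i-1}` read along `ρ` up to position `i` is an ugly prefix for the
acceptance condition `Inf(S)`. -/
theorem ugly_prefix_for_inf {Q A : Type*} [Fintype Q] [Fintype A]
    (δ : Set (Q × A × Q)) (Q₀ : Set Q)
    (hdet₀ : ∃ q₀, Q₀ = {q₀})
    (hdet : ∀ q a q₁ q₂, (q, a, q₁) ∈ δ → (q, a, q₂) ∈ δ → q₁ = q₂)
    (hcomp : ∀ q a, ∃ q', (q, a, q') ∈ δ)
    (run : (ℕ → A) → ℕ → Q)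
    (hrun : ∀ w, IsRunOn δ Q₀ w (run w))
    (T S : Set Q)
    (hT : IsMinTrap δ T)
    (hST : (S ∩ T).Nonempty)
    (hTSne : (T \ S).Nonempty)
    (hTStr : ¬ IsTransient δ Q₀ (T \ S))
    (ρ : ℕ → Q) (w : ℕ → A) (hρ : IsRunOn δ Q₀ w ρ)
    (i : ℕ) (hi : ρ i ∈ T) :
    UglyPrefix run (fun r => {n | r n ∈ S}.Infinite) (List.ofFn fun k : Fin i => w k) := by
  obtain ⟨q₀, rfl⟩ := hdet₀
  exact ugly_prefix_for_inf_general Set.subsingleton_singleton hdet hrun hT hST hTStr hρ hi
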